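/- arXiv:math/0607181 — 6 statements merged into one kernel-verified Lean document; each statement's English description precedes it below -/
import Mathlib

section
/- Let T > 0 and α > 0 be constants, let δ : ℝ → ℝ be continuous and nonnegative on [0,T], and let y : ℝ → ℝ be differentiable on [0,T] with y(0) = y₀ ≥ 0 and y'(t) ≤ δ(t) + α·y(t)² for every t ∈ [0,T]. Set η = y₀ + ∫₀ᵀ δ(s) ds. Then for every t ∈ [0,T] with α·η·t < 1 one has y(t) ≤ η / (1 − α·η·t). -/
open Set MeasureTheory

/-!
If `y ≥ 0`, integrating the differential inequality gives `y t ≤ v t := η + α ∫₀ᵗ y²`, and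
`v' = α y² ≤ α v²` says that `-1 / v` grows at rate at most `α`. Where `y < 0` the bound
`y ≤ v` no longer controls `y²`, so in general one starts instead from the last time `s ≤ t` at
which `y` takes the value `y₀`: if `y t ≥ y₀`, then `y ≥ y₀ ≥ 0` on `[s, t]`.
-/

open Filter Topology

lemma exists_eq_left_forall_left_le {X Y : Type*} [ConditionallyCompleteLinearOrder X]
    [TopologicalSpace X] [OrderTopology X] [DenselyOrdered X] [LinearOrder Y] [TopologicalSpace Y]
    [OrderClosedTopology Y] {f : X → Y} {a b : X} (hab : a ≤ b) (hf : ContinuousOn f (Icc a b))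
    (hfab : f a ≤ f b) :
    ∃ s ∈ Icc a b, f s = f a ∧ ∀ r ∈ Icc s b, f a ≤ f r := by
  have hcompact : IsCompact (Icc a b ∩ f ⁻¹' {f a}) :=
    isCompact_Icc.of_isClosed_subset (hf.preimage_isClosed_of_isClosed isClosed_Icc
      isClosed_singleton) inter_subset_left
  obtain ⟨s, ⟨hs, hfs⟩, hlast⟩ := hcompact.exists_isGreatest ⟨a, left_mem_Icc.2 hab, rfl⟩
  refine ⟨s, hs, hfs, fun r hr ↦ ?_⟩
  by_contra! hfr
  obtain ⟨z, hz, hfz⟩ := intermediate_value_Icc hr.2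
    (hf.mono (Icc_subset_Icc_left (hs.1.trans hr.1))) ⟨hfr.le, hfab⟩
  have hzs : z ≤ s := hlast ⟨⟨hs.1.trans (hr.1.trans hz.1), hz.2⟩, hfz⟩
  have hzr : z = r := (hzs.trans hr.1).antisymm hz.1
  exact hfr.ne (hzr ▸ hfz)

section Riccati

variable {a b α C : ℝ}

lemma le_div_of_deriv_right_le_mul_sq {v v' : ℝ → ℝ} (hab : a ≤ b)
    (hv : ContinuousOn v (Icc a b)) (hv' : ∀ t ∈ Ioo a b, HasDerivWithinAt v (v' t) (Ioi t) t)
    (hpos : ∀ t ∈ Icc a b, 0 < v t) (hle : ∀ t ∈ Ioo a b, v' t ≤ α * v t ^ 2)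
    (hlt : α * v a * (b - a) < 1) :
    v b ≤ v a / (1 - α * v a * (b - a)) := by
  have hva : 0 < v a := hpos a (left_mem_Icc.2 hab)
  have hvb : 0 < v b := hpos b (right_mem_Icc.2 hab)
  have hinv : -(v b)⁻¹ - -(v a)⁻¹ ≤ ∫ _ in a..b, α := by
    refine intervalIntegral.sub_le_integral_of_hasDeriv_right_of_le hab
      (hv.inv₀ fun t ht ↦ (hpos t ht).ne').neg
      (fun t ht ↦ ((hv' t ht).inv (hpos t (Ioo_subset_Icc_self ht)).ne').neg)
      (integrableOn_const (by simp)) fun t ht ↦ ?_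
    rw [neg_div, neg_neg, div_le_iff₀ (pow_pos (hpos t (Ioo_subset_Icc_self ht)) 2)]
    exact hle t ht
  rw [intervalIntegral.integral_const, smul_eq_mul] at hinv
  rw [le_div_iff₀ (sub_pos.2 hlt)]
  calc v b * (1 - α * v a * (b - a)) = v b * v a * ((v a)⁻¹ - (b - a) * α) := by
        field_simp
    _ ≤ v b * v a * (v b)⁻¹ := by gcongr; linarith
    _ = v a := by field_simp

lemma le_div_of_le_add_mul_integral_sq_of_pos {u : ℝ → ℝ} (hα : 0 ≤ α) (hC : 0 < C) (hab : a ≤ b)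
    (hu : ContinuousOn u (Icc a b)) (hu₀ : ∀ t ∈ Icc a b, 0 ≤ u t)
    (hle : ∀ t ∈ Icc a b, u t ≤ C + α * ∫ s in a..t, u s ^ 2) (hlt : α * C * (b - a) < 1) :
    u b ≤ C / (1 - α * C * (b - a)) := by
  set v : ℝ → ℝ := fun t ↦ C + α * ∫ s in a..t, u s ^ 2
  have hva : v a = C := by simp [v]
  have hu2 : ContinuousOn (fun s ↦ u s ^ 2) (Icc a b) := hu.pow 2
  have hv : ContinuousOn v (Icc a b) := by
    have hprim := intervalIntegral.continuousOn_primitive_interval (μ := volume)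
      (uIcc_of_le hab ▸ hu2.integrableOn_Icc)
    exact ((uIcc_of_le hab ▸ hprim).const_mul α).const_add C
  have hv' : ∀ t ∈ Ioo a b, HasDerivWithinAt v (α * u t ^ 2) (Ioi t) t := fun t ht ↦ by
    have hprim : HasDerivAt (fun r ↦ ∫ s in a..r, u s ^ 2) (u t ^ 2) t :=
      intervalIntegral.integral_hasDerivAt_right
        ((hu2.mono (Icc_subset_Icc_right ht.2.le)).intervalIntegrable_of_Icc ht.1.le)
        ((hu2.mono Ioo_subset_Icc_self).stronglyMeasurableAtFilter isOpen_Ioo t ht)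
        (hu2.continuousAt (Icc_mem_nhds ht.1 ht.2))
    exact ((hprim.const_mul α).const_add C).hasDerivWithinAt
  have hpos : ∀ t ∈ Icc a b, 0 < v t := fun t ht ↦
    add_pos_of_pos_of_nonneg hC <| mul_nonneg hα <|
      intervalIntegral.integral_nonneg ht.1 fun s _ ↦ sq_nonneg (u s)
  have hvle : ∀ t ∈ Ioo a b, α * u t ^ 2 ≤ α * v t ^ 2 := fun t ht ↦ by
    have ht' := Ioo_subset_Icc_self ht
    gcongr
    exacts [hu₀ t ht', hle t ht']
  calc u b ≤ v b := hle b (right_mem_Icc.2 hab)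
    _ ≤ v a / (1 - α * v a * (b - a)) :=
        le_div_of_deriv_right_le_mul_sq hab hv hv' hpos hvle (by rwa [hva])
    _ = C / (1 - α * C * (b - a)) := by rw [hva]

lemma le_div_of_le_add_mul_integral_sq {u : ℝ → ℝ} (hα : 0 ≤ α) (hab : a ≤ b)
    (hu : ContinuousOn u (Icc a b)) (hu₀ : ∀ t ∈ Icc a b, 0 ≤ u t)
    (hle : ∀ t ∈ Icc a b, u t ≤ C + α * ∫ s in a..t, u s ^ 2) (hlt : α * C * (b - a) < 1) :
    u b ≤ C / (1 - α * C * (b - a)) := by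
  have ha : a ∈ Icc a b := left_mem_Icc.2 hab
  have hC : 0 ≤ C := (hu₀ a ha).trans <| by simpa using hle a ha
  have hden : Tendsto (fun c ↦ α * c * (b - a)) (𝓝[>] C) (𝓝 (α * C * (b - a))) :=
    (Continuous.tendsto (by fun_prop) C).mono_left nhdsWithin_le_nhds
  refine ge_of_tendsto ((tendsto_id.mono_left nhdsWithin_le_nhds).div
    (hden.const_sub 1) (sub_pos.2 hlt).ne') ?_
  filter_upwards [hden.eventually_lt_const hlt, self_mem_nhdsWithin] with c hc (hCc : C < c)
  exact le_div_of_le_add_mul_integral_sq_of_pos hα (hC.trans_lt hCc) hab hu hu₀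
    (fun t ht ↦ (hle t ht).trans <| by gcongr; exact hCc.le) hc

lemma le_div_of_deriv_right_le_add_mul_sq_of_nonneg {δ y y' : ℝ → ℝ} (hα : 0 ≤ α) (hab : a ≤ b)
    (hδ : IntegrableOn δ (Icc a b)) (hδ₀ : 0 ≤ᵐ[volume.restrict (Ioc a b)] δ)
    (hy : ContinuousOn y (Icc a b)) (hy' : ∀ t ∈ Ioo a b, HasDerivWithinAt y (y' t) (Ioi t) t)
    (hy₀ : ∀ t ∈ Icc a b, 0 ≤ y t) (hle : ∀ t ∈ Ioo a b, y' t ≤ δ t + α * y t ^ 2)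
    (hC : y a + ∫ s in a..b, δ s ≤ C) (hlt : α * C * (b - a) < 1) :
    y b ≤ C / (1 - α * C * (b - a)) := by
  refine le_div_of_le_add_mul_integral_sq hα hab hy hy₀ (fun t ht ↦ ?_) hlt
  have hsub : Icc a t ⊆ Icc a b := Icc_subset_Icc_right ht.2
  have hIoo : Ioo a t ⊆ Ioo a b := Ioo_subset_Ioo_right ht.2
  have hδt : IntegrableOn δ (Icc a t) := hδ.mono_set hsub
  have hyt : IntegrableOn (fun s ↦ α * y s ^ 2) (Icc a t) :=
    (((hy.mono hsub).pow 2).const_mul α).integrableOn_Icc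
  have hftc : y t - y a ≤ ∫ s in a..t, δ s + α * y s ^ 2 :=
    intervalIntegral.sub_le_integral_of_hasDeriv_right_of_le ht.1 (hy.mono hsub)
      (fun s hs ↦ hy' s (hIoo hs)) (hδt.add hyt) fun s hs ↦ hle s (hIoo hs)
  have hδle : ∫ s in a..t, δ s ≤ ∫ s in a..b, δ s :=
    intervalIntegral.integral_mono_interval le_rfl ht.1 ht.2 hδ₀
      ((intervalIntegrable_iff_integrableOn_Icc_of_le hab).2 hδ)
  rw [intervalIntegral.integral_add ((intervalIntegrable_iff_integrableOn_Icc_of_le ht.1).2 hδt)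
    ((intervalIntegrable_iff_integrableOn_Icc_of_le ht.1).2 hyt),
    intervalIntegral.integral_const_mul] at hftc
  linarith

end Riccati

theorem ode_blowup_bound_general {T α : ℝ} (hα : 0 ≤ α) {δ y y' : ℝ → ℝ}
    (hδ : IntegrableOn δ (Icc 0 T)) (hδ₀ : 0 ≤ᵐ[volume.restrict (Ioc 0 T)] δ)
    (hy : ContinuousOn y (Icc 0 T)) (hy' : ∀ t ∈ Ioo 0 T, HasDerivWithinAt y (y' t) (Ioi t) t)
    (hy₀ : 0 ≤ y 0) (hle : ∀ t ∈ Ioo 0 T, y' t ≤ δ t + α * y t ^ 2) {η : ℝ}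
    (hη : y 0 + ∫ s in 0..T, δ s ≤ η) {t : ℝ} (ht : t ∈ Icc 0 T) (hlt : α * η * t < 1) :
    y t ≤ η / (1 - α * η * t) := by
  have hδint : IntervalIntegrable δ volume 0 T :=
    (intervalIntegrable_iff_integrableOn_Icc_of_le (ht.1.trans ht.2)).2 hδ
  have hδnonneg : 0 ≤ ∫ s in 0..T, δ s := by
    rw [intervalIntegral.integral_of_le (ht.1.trans ht.2)]
    exact integral_nonneg_of_ae hδ₀
  have hyη : y 0 ≤ η := by linarith
  have hη₀ : 0 ≤ η := hy₀.trans hyη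
  have hαη : 0 ≤ α * η := mul_nonneg hα hη₀
  obtain hyt | hyt := lt_or_ge (y t) (y 0)
  · calc y t ≤ η := hyt.le.trans hyη
      _ ≤ η / (1 - α * η * t) :=
        le_div_self hη₀ (sub_pos.2 hlt) (sub_le_self _ (mul_nonneg hαη ht.1))
  obtain ⟨s, hs, hys, hge⟩ :=
    exists_eq_left_forall_left_le ht.1 (hy.mono (Icc_subset_Icc_right ht.2)) hyt
  have hIcc : Icc s t ⊆ Icc 0 T := Icc_subset_Icc hs.1 ht.2
  have hIoo : Ioo s t ⊆ Ioo 0 T := Ioo_subset_Ioo hs.1 ht.2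
  have hδst : ∫ r in s..t, δ r ≤ ∫ r in 0..T, δ r :=
    intervalIntegral.integral_mono_interval hs.1 hs.2 ht.2 hδ₀ hδint
  have htime : α * η * (t - s) ≤ α * η * t := by
    gcongr
    exact sub_le_self t hs.1
  calc y t ≤ η / (1 - α * η * (t - s)) :=
        le_div_of_deriv_right_le_add_mul_sq_of_nonneg hα hs.2 (hδ.mono_set hIcc)
          (ae_restrict_of_ae_restrict_of_subset (Ioc_subset_Ioc hs.1 ht.2) hδ₀) (hy.mono hIcc)
          (fun r hr ↦ hy' r (hIoo hr)) (fun r hr ↦ hy₀.trans (hge r hr))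
          (fun r hr ↦ hle r (hIoo hr)) (by linarith) (htime.trans_lt hlt)
    _ ≤ η / (1 - α * η * t) := by gcongr

/-- ODE lemma: if `y' ≤ δ(t) + α y²` on `[0,T]` with `y(0) = y₀ ≥ 0`, then with
`η = y₀ + ∫₀ᵀ δ`, one has `y(t) ≤ η / (1 - α η t)` whenever `α η t < 1`. -/
theorem ode_blowup_bound
    (T α y₀ : ℝ) (hT : 0 < T) (hα : 0 < α)
    (δ y y' : ℝ → ℝ)
    (hδcont : ContinuousOn δ (Icc 0 T))
    (hδnonneg : ∀ t ∈ Icc (0:ℝ) T, 0 ≤ δ t)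
    (hderiv : ∀ t ∈ Icc (0:ℝ) T, HasDerivWithinAt y (y' t) (Icc 0 T) t)
    (hy0 : y 0 = y₀) (hy₀ : 0 ≤ y₀)
    (hineq : ∀ t ∈ Icc (0:ℝ) T, y' t ≤ δ t + α * (y t) ^ 2)
    (η : ℝ) (hη : η = y₀ + ∫ s in (0:ℝ)..T, δ s) :
    ∀ t ∈ Icc (0:ℝ) T, α * η * t < 1 → y t ≤ η / (1 - α * η * t) := fun t ht hlt ↦
  ode_blowup_bound_general hα.le hδcont.integrableOn_Icc
    (ae_restrict_of_forall_mem measurableSet_Ioc fun t ht ↦ hδnonneg t (Ioc_subset_Icc_self ht))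
    (fun t ht ↦ (hderiv t ht).continuousWithinAt)
    (fun t ht ↦ ((hderiv t (Ioo_subset_Icc_self ht)).hasDerivAt
      (Icc_mem_nhds ht.1 ht.2)).hasDerivWithinAt)
    (hy0 ▸ hy₀) (fun t ht ↦ hineq t (Ioo_subset_Icc_self ht)) (by rw [hη, hy0]) ht hlt
end

section
/- Let T > 0 and α > 0 be constants. For every ε > 0 there exists η₀ > 0 (depending only on α, T and ε) with the following property: whenever δ : ℝ → ℝ is continuous and nonnegative on [0,T] and y : ℝ → ℝ is differentiable on [0,T] with y(0) = y₀ ≥ 0, y'(t) ≤ δ(t) + α·y(t)² for every t ∈ [0,T], and η := y₀ + ∫₀ᵀ δ(s) ds ≤ η₀, then 0 ≤ y(t) implies y(t) ≤ ε for every t ∈ [0,T] (i.e. y(t) ≤ ε uniformly on [0,T]; thus y → 0 uniformly on [0,T] as η → 0). -/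
/-! If `y` reached a small level `m`, then between the last earlier time at which `y = y 0` and the
first time at which `y = m` it would stay in `[y 0, m]`. There the nonlinearity is at most `c m`,
with `c` as small as we like because the nonlinearity is `o(y)`, so integrating the differential
inequality gives `m - y 0 ≤ ∫ δ + c m T`. This is impossible once `c T < 1 / 2` and
`y 0 + ∫ δ ≤ m / 2`. -/

open Set MeasureTheory

open Asymptotics
open scoped Topology

section Crossing

variable {α β : Type*} [ConditionallyCompleteLinearOrder α] [DenselyOrdered α]
  [TopologicalSpace α] [OrderTopology α] [LinearOrder β] [TopologicalSpace β]
  [OrderClosedTopology β] {f : α → β} {a b : α} {p q : β}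

theorem exists_mem_Icc_eq_and_forall_before_le (hab : a ≤ b) (hf : ContinuousOn f (Icc a b))
    (ha : f a ≤ q) (hb : q ≤ f b) : ∃ d ∈ Icc a b, f d = q ∧ ∀ x ∈ Icc a d, f x ≤ q := by
  have hcompact : IsCompact (Icc a b ∩ f ⁻¹' {q}) :=
    isCompact_Icc.of_isClosed_subset
      (hf.preimage_isClosed_of_isClosed isClosed_Icc isClosed_singleton) inter_subset_left
  obtain ⟨d, ⟨hd, hfd⟩, hleast⟩ :=
    hcompact.exists_isLeast (intermediate_value_Icc hab hf ⟨ha, hb⟩)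
  refine ⟨d, hd, hfd, fun x hx ↦ le_of_not_gt fun hqx ↦ ?_⟩
  have hxb : x ≤ b := hx.2.trans hd.2
  obtain ⟨z, hz, hfz⟩ :=
    intermediate_value_Icc hx.1 (hf.mono (Icc_subset_Icc_right hxb)) ⟨ha, hqx.le⟩
  have hdz : d ≤ z := hleast ⟨⟨hz.1, hz.2.trans hxb⟩, hfz⟩
  have hxd : x = d := hx.2.antisymm (hdz.trans hz.2)
  exact hqx.ne' (hxd ▸ hfd)

theorem exists_mem_Icc_eq_and_forall_after_ge (hab : a ≤ b) (hf : ContinuousOn f (Icc a b))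
    (ha : f a ≤ p) (hb : p ≤ f b) : ∃ c ∈ Icc a b, f c = p ∧ ∀ x ∈ Icc c b, p ≤ f x := by
  have hdual := exists_mem_Icc_eq_and_forall_before_le (α := αᵒᵈ) (β := βᵒᵈ)
    (f := OrderDual.toDual ∘ f ∘ OrderDual.ofDual) (a := OrderDual.toDual b)
    (b := OrderDual.toDual a) (q := OrderDual.toDual p) hab (by rwa [Icc_toDual]) hb ha
  obtain ⟨c, hc, hfc, hge⟩ := hdual
  exact ⟨c, hc.symm, hfc, fun x hx ↦ hge x hx.symm⟩

theorem exists_Icc_subset_mapsTo_Icc (hab : a ≤ b) (hf : ContinuousOn f (Icc a b))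
    (ha : f a ≤ p) (hpq : p ≤ q) (hb : q ≤ f b) :
    ∃ c d, c ≤ d ∧ Icc c d ⊆ Icc a b ∧ f c = p ∧ f d = q ∧ MapsTo f (Icc c d) (Icc p q) := by
  obtain ⟨d, hd, hfd, hle⟩ :=
    exists_mem_Icc_eq_and_forall_before_le hab hf (ha.trans hpq) hb
  obtain ⟨c, hc, hfc, hge⟩ := exists_mem_Icc_eq_and_forall_after_ge hd.1
    (hf.mono (Icc_subset_Icc_right hd.2)) ha (hpq.trans_eq hfd.symm)
  exact ⟨c, d, hc.2, Icc_subset_Icc hc.1 hd.2, hfc, hfd,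
    fun x hx ↦ ⟨hge x hx, hle x ⟨hc.1.trans hx.1, hx.2⟩⟩⟩

end Crossing

theorem image_lt_of_deriv_right_le_of_add_integral_lt {f f' φ : ℝ → ℝ} {a b p q : ℝ}
    (hf : ContinuousOn f (Icc a b))
    (hf' : ∀ x ∈ Ioo a b, HasDerivWithinAt f (f' x) (Ioi x) x)
    (hφ : IntervalIntegrable φ volume a b) (hφ_nonneg : ∀ x ∈ Icc a b, 0 ≤ φ x)
    (hbound : ∀ x ∈ Ioo a b, f x ∈ Icc p q → f' x ≤ φ x)
    (ha : f a ≤ p) (hpq : p + ∫ x in a..b, φ x < q) : ∀ x ∈ Icc a b, f x < q := by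
  intro x hx
  by_contra! hqx
  have hab : a ≤ b := hx.1.trans hx.2
  have hint_nonneg : 0 ≤ ∫ x in a..b, φ x := intervalIntegral.integral_nonneg hab hφ_nonneg
  obtain ⟨c, d, hcd, hsub, hfc, hfd, hmaps⟩ := exists_Icc_subset_mapsTo_Icc hx.1
    (hf.mono (Icc_subset_Icc_right hx.2)) ha (by linarith) hqx
  replace hsub : Icc c d ⊆ Icc a b := hsub.trans (Icc_subset_Icc_right hx.2)
  obtain ⟨hac, hdb⟩ := (Icc_subset_Icc_iff hcd).1 hsub
  have hIoo : Ioo c d ⊆ Ioo a b := Ioo_subset_Ioo hac hdb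
  have hincrement : f d - f c ≤ ∫ x in c..d, φ x :=
    intervalIntegral.sub_le_integral_of_hasDeriv_right_of_le hcd (hf.mono hsub)
      (fun t ht ↦ hf' t (hIoo ht))
      (((intervalIntegrable_iff_integrableOn_Icc_of_le hab).1 hφ).mono_set hsub)
      (fun t ht ↦ hbound t (hIoo ht) (hmaps (Ioo_subset_Icc_self ht)))
  have hmono : ∫ x in c..d, φ x ≤ ∫ x in a..b, φ x :=
    intervalIntegral.integral_mono_interval hac hcd hdb
      (ae_restrict_of_forall_mem measurableSet_Ioc fun t ht ↦
        hφ_nonneg t (Ioc_subset_Icc_self ht)) hφ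
  linarith

theorem exists_mem_Ioc_forall_norm_le_mul_of_isLittleO {E : Type*} [Norm E] {g : ℝ → E}
    (hg : g =o[𝓝[≥] 0] fun x ↦ x) {c ε : ℝ} (hc : 0 < c) (hε : 0 < ε) :
    ∃ m ∈ Ioc 0 ε, ∀ x ∈ Icc 0 m, ‖g x‖ ≤ c * m := by
  obtain ⟨u, hu, hgu⟩ := mem_nhdsGE_iff_exists_Icc_subset.1 (hg.def hc)
  refine ⟨min ε u, ⟨lt_min hε hu, min_le_left _ _⟩, fun x hx ↦ ?_⟩
  calc
    ‖g x‖ ≤ c * ‖x‖ := hgu ⟨hx.1, hx.2.trans (min_le_right _ _)⟩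
    _ = c * x := by rw [Real.norm_of_nonneg hx.1]
    _ ≤ c * min ε u := by gcongr; exact hx.2

theorem ode_uniform_smallness_general {g : ℝ → ℝ} (hg : g =o[𝓝[≥] 0] fun x ↦ x) (T : ℝ) :
    ∀ ε > (0:ℝ), ∃ η₀ > (0:ℝ),
      ∀ δ y y' : ℝ → ℝ,
        IntervalIntegrable δ volume 0 T →
        (∀ t ∈ Icc (0:ℝ) T, 0 ≤ δ t) →
        ContinuousOn y (Icc 0 T) →
        (∀ t ∈ Ioo (0:ℝ) T, HasDerivWithinAt y (y' t) (Ioi t) t) →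
        0 ≤ y 0 →
        (∀ t ∈ Ioo (0:ℝ) T, y' t ≤ δ t + g (y t)) →
        y 0 + (∫ s in (0:ℝ)..T, δ s) ≤ η₀ →
        ∀ t ∈ Icc (0:ℝ) T, y t ≤ ε := by
  intro ε hε
  obtain ⟨c, hc, hcT⟩ : ∃ c, 0 < c ∧ T * c < 1 / 2 := exists_pos_mul_lt one_half_pos T
  obtain ⟨m, ⟨hm, hmε⟩, hgm⟩ := exists_mem_Ioc_forall_norm_le_mul_of_isLittleO hg hc hε
  refine ⟨m / 2, half_pos hm, fun δ y y' hδ hδ_nonneg hy hy' hy0 hbound hη t ht ↦ ?_⟩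
  have hintegral : ∫ s in (0:ℝ)..T, (δ s + c * m) = (∫ s in (0:ℝ)..T, δ s) + T * c * m := by
    rw [intervalIntegral.integral_add hδ intervalIntegrable_const,
      intervalIntegral.integral_const, smul_eq_mul]
    ring
  have hsmall_integral : y 0 + ∫ s in (0:ℝ)..T, (δ s + c * m) < m := by
    have hTcm : T * c * m < 1 / 2 * m := by gcongr
    linarith
  have hderiv_le : ∀ s ∈ Ioo 0 T, y s ∈ Icc (y 0) m → y' s ≤ δ s + c * m := by
    intro s hs hys
    have hg_le : g (y s) ≤ c * m := (le_abs_self _).trans (hgm _ ⟨hy0.trans hys.1, hys.2⟩)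
    linarith [hbound s hs]
  have hlt : y t < m := image_lt_of_deriv_right_le_of_add_integral_lt hy hy'
    (hδ.add intervalIntegrable_const) (fun s hs ↦ add_nonneg (hδ_nonneg s hs) (by positivity))
    hderiv_le le_rfl hsmall_integral t ht
  exact hlt.le.trans hmε

/-- Uniform smallness: for every `ε > 0` there is `η₀ > 0` (depending only on `α, T, ε`)
such that whenever `y' ≤ δ(t) + α y²` on `[0,T]`, `y(0) = y₀ ≥ 0`, and
`η = y₀ + ∫₀ᵀ δ ≤ η₀`, then `0 ≤ y(t)` implies `y(t) ≤ ε` for every `t ∈ [0,T]`. -/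
theorem ode_uniform_smallness
    (T α : ℝ) (hT : 0 < T) (hα : 0 < α) :
    ∀ ε > (0:ℝ), ∃ η₀ > (0:ℝ),
      ∀ (δ y y' : ℝ → ℝ) (y₀ : ℝ),
        ContinuousOn δ (Icc 0 T) →
        (∀ t ∈ Icc (0:ℝ) T, 0 ≤ δ t) →
        (∀ t ∈ Icc (0:ℝ) T, HasDerivWithinAt y (y' t) (Icc 0 T) t) →
        y 0 = y₀ → 0 ≤ y₀ →
        (∀ t ∈ Icc (0:ℝ) T, y' t ≤ δ t + α * (y t) ^ 2) →
        y₀ + (∫ s in (0:ℝ)..T, δ s) ≤ η₀ →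
        ∀ t ∈ Icc (0:ℝ) T, 0 ≤ y t → y t ≤ ε := by
  intro ε hε
  obtain ⟨η₀, hη₀, hsmall⟩ := ode_uniform_smallness_general
    (((isLittleO_pow_id one_lt_two).mono nhdsWithin_le_nhds).const_mul_left α) T ε hε
  refine ⟨η₀, hη₀, ?_⟩
  rintro δ y y' _ hδ hδ_nonneg hy rfl hy0 hbound hη t ht -
  exact hsmall δ y y' (hδ.intervalIntegrable_of_Icc hT.le) hδ_nonneg
    (HasDerivWithinAt.continuousOn hy)
    (fun s hs ↦ (hy s (Ioo_subset_Icc_self hs)).mono_of_mem_nhdsWithin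
      (Icc_mem_nhdsGT_of_mem (Ioo_subset_Ico_self hs)))
    hy0 (fun s hs ↦ hbound s (Ioo_subset_Icc_self hs)) hη t ht
end

section
/- Let T > 0 and α > 0 be constants and let δ : ℝ → ℝ be continuous on [0,T]. Suppose y, Y : ℝ → ℝ are differentiable on [0,T], that y'(t) ≤ δ(t) + α·y(t)² for every t ∈ [0,T], that Y'(t) = δ(t) + α·Y(t)² for every t ∈ [0,T], and that y(0) ≤ Y(0). Then y(t) ≤ Y(t) for every t ∈ [0,T]. -/
/-!
Let `f` be a subsolution and `g` a supersolution of `u' = v t u`. Where `f` exceeds `g`, the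
Lipschitz bound on a compact set containing the values of both gives `(f - g)' ≤ K (f - g)`. For
every `c > 0` the function `c * exp ((K + 1) * (t - a))` is then a strict barrier: `f - g` cannot
cross it, because at a contact point it is positive and grows more slowly than the barrier. Letting
`c → 0` gives `f ≤ g`.
-/

open Set MeasureTheory

section ScalarInequality

variable {w w' : ℝ → ℝ} {a b K : ℝ}

theorem le_mul_exp_of_deriv_right_lt_mul_of_pos {c : ℝ} (hc : 0 < c)
    (hw : ContinuousOn w (Icc a b))
    (hw' : ∀ t ∈ Ico a b, HasDerivWithinAt w (w' t) (Ici t) t)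
    (ha : w a ≤ c) (bound : ∀ t ∈ Ico a b, 0 < w t → w' t < K * w t) :
    ∀ t ∈ Icc a b, w t ≤ c * Real.exp (K * (t - a)) := by
  have barrier_deriv (t : ℝ) : HasDerivAt (fun t ↦ c * Real.exp (K * (t - a)))
      (K * (c * Real.exp (K * (t - a)))) t :=
    ((((hasDerivAt_id' t).sub_const a).const_mul K).exp.const_mul c).congr_deriv (by ring)
  refine image_le_of_deriv_right_lt_deriv_boundary hw hw' (by simpa using ha) barrier_deriv ?_
  intro t ht contact
  have w_pos : 0 < w t := contact ▸ by positivity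
  exact contact ▸ bound t ht w_pos

theorem nonpos_of_deriv_right_le_mul_of_pos (hw : ContinuousOn w (Icc a b))
    (hw' : ∀ t ∈ Ico a b, HasDerivWithinAt w (w' t) (Ici t) t)
    (ha : w a ≤ 0) (bound : ∀ t ∈ Ico a b, 0 < w t → w' t ≤ K * w t) :
    ∀ t ∈ Icc a b, w t ≤ 0 := by
  intro t ht
  have exp_pos := Real.exp_pos ((K + 1) * (t - a))
  have strict_bound : ∀ s ∈ Ico a b, 0 < w s → w' s < (K + 1) * w s := fun s hs w_pos ↦
    (bound s hs w_pos).trans_lt (mul_lt_mul_of_pos_right (lt_add_one K) w_pos)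
  have quotient_nonpos : w t / Real.exp ((K + 1) * (t - a)) ≤ 0 :=
    le_of_forall_gt_imp_ge_of_dense fun c hc ↦ (div_le_iff₀ exp_pos).2 <|
      le_mul_exp_of_deriv_right_lt_mul_of_pos hc hw hw' (ha.trans hc.le) strict_bound t ht
  simpa only [zero_mul] using (div_le_iff₀ exp_pos).1 quotient_nonpos

end ScalarInequality

theorem exists_lipschitzOnWith_const_add {X E ι : Type*} [PseudoMetricSpace X]
    [SeminormedAddCommGroup E] {p : X → E} (hp : LocallyLipschitz p) (δ : ι → E) {s : Set X}
    (hs : IsCompact s) : ∃ K, ∀ t, LipschitzOnWith K (fun x ↦ δ t + p x) s := by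
  obtain ⟨K, hK⟩ := hp.locallyLipschitzOn.exists_lipschitzOnWith_of_compact hs
  exact ⟨K, fun t x hx y hy ↦ by simpa only [edist_add_left] using hK hx hy⟩

theorem ode_comparison_general {a b : ℝ} {v : ℝ → ℝ → ℝ} {f f' g g' : ℝ → ℝ}
    (hv : ∀ s, IsCompact s → ∃ K, ∀ t ∈ Icc a b, LipschitzOnWith K (v t) s)
    (hf : ∀ t ∈ Icc a b, HasDerivWithinAt f (f' t) (Icc a b) t)
    (hg : ∀ t ∈ Icc a b, HasDerivWithinAt g (g' t) (Icc a b) t)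
    (f_sub : ∀ t ∈ Icc a b, f' t ≤ v t (f t))
    (g_super : ∀ t ∈ Icc a b, v t (g t) ≤ g' t)
    (ha : f a ≤ g a) :
    ∀ t ∈ Icc a b, f t ≤ g t := by
  have f_cont : ContinuousOn f (Icc a b) := HasDerivWithinAt.continuousOn hf
  have g_cont : ContinuousOn g (Icc a b) := HasDerivWithinAt.continuousOn hg
  obtain ⟨K, hK⟩ := hv (f '' Icc a b ∪ g '' Icc a b)
    ((isCompact_Icc.image_of_continuousOn f_cont).union
      (isCompact_Icc.image_of_continuousOn g_cont))
  have sub_deriv : ∀ t ∈ Ico a b,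
      HasDerivWithinAt (fun t ↦ f t - g t) (f' t - g' t) (Ici t) t := fun t ht ↦
    have ht' := Ico_subset_Icc_self ht
    ((hf t ht').sub (hg t ht')).mono_of_mem_nhdsWithin (Icc_mem_nhdsGE_of_mem ht)
  have deriv_bound : ∀ t ∈ Ico a b, 0 < f t - g t → f' t - g' t ≤ K * (f t - g t) := by
    intro t ht sub_pos
    have ht' := Ico_subset_Icc_self ht
    calc
      f' t - g' t ≤ v t (f t) - v t (g t) := sub_le_sub (f_sub t ht') (g_super t ht')
      _ ≤ dist (v t (f t)) (v t (g t)) := le_abs_self _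
      _ ≤ K * dist (f t) (g t) :=
        (hK t ht').dist_le_mul _ (.inl ⟨t, ht', rfl⟩) _ (.inr ⟨t, ht', rfl⟩)
      _ = K * (f t - g t) := by rw [Real.dist_eq, abs_of_pos sub_pos]
  exact fun t ht ↦ sub_nonpos.1 <|
    nonpos_of_deriv_right_le_mul_of_pos (f_cont.sub g_cont) sub_deriv (sub_nonpos.2 ha)
      deriv_bound t ht

/-- Comparison principle: if `y' ≤ δ(t) + α y²`, `Y' = δ(t) + α Y²` on `[0,T]` and
`y(0) ≤ Y(0)`, then `y(t) ≤ Y(t)` on `[0,T]`. -/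
theorem ode_comparison
    (T α : ℝ) (hT : 0 < T) (hα : 0 < α)
    (δ y y' Y Y' : ℝ → ℝ)
    (hδcont : ContinuousOn δ (Icc 0 T))
    (hyderiv : ∀ t ∈ Icc (0:ℝ) T, HasDerivWithinAt y (y' t) (Icc 0 T) t)
    (hYderiv : ∀ t ∈ Icc (0:ℝ) T, HasDerivWithinAt Y (Y' t) (Icc 0 T) t)
    (hyineq : ∀ t ∈ Icc (0:ℝ) T, y' t ≤ δ t + α * (y t) ^ 2)
    (hYode : ∀ t ∈ Icc (0:ℝ) T, Y' t = δ t + α * (Y t) ^ 2)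
    (h0 : y 0 ≤ Y 0) :
    ∀ t ∈ Icc (0:ℝ) T, y t ≤ Y t := by
  have quadratic_lipschitz : LocallyLipschitz fun x : ℝ ↦ α * x ^ 2 :=
    ContDiff.locallyLipschitz (𝕂 := ℝ) (by fun_prop)
  exact ode_comparison_general
    (fun _ hs ↦ (exists_lipschitzOnWith_const_add quadratic_lipschitz δ hs).imp fun _ hK t _ ↦ hK t)
    hyderiv hYderiv hyineq (fun t ht ↦ (hYode t ht).ge) h0
end

section
/- Let T > 0 and c > 0 be constants, let a, δ : ℝ → ℝ be continuous and nonnegative on [0,T], and let w : ℝ → ℝ be differentiable and nonnegative on [0,T] with w(0) = w₀ and w'(t) ≤ δ(t) + a(t)·w(t) + c·w(t)² for every t ∈ [0,T]. Set α = c·exp(∫₀ᵀ a(s) ds) and η = w₀ + ∫₀ᵀ δ(s) ds. If α·η·T < 1, then for every t ∈ [0,T] one has w(t) ≤ exp(∫₀ᵗ a(s) ds) · η / (1 − α·η·t); in particular w remains bounded on [0,T]. -/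
open Set MeasureTheory

/-!
The difference of a subsolution `u` and a supersolution `v` of the Riccati equation
`x' = δ + a x + c x²` satisfies the linear inequality `(u - v)' ≤ (a + c (u + v)) (u - v)`, so
Grönwall's inequality keeps `u` below `v`, whatever the signs of `u`, `v` and the coefficients.
It remains to exhibit a supersolution. If `a = 0` and `δ = 0`, the solution is `P / (1 - P R)` with
`P` the initial value and `R = ∫ c`. Letting `P` grow absorbs `δ`, and the factor `exp A` with
`A' = a` absorbs the linear term. On `[0, T]` one can take `A = ∫₀ᵗ a`, `P = w(0) + ∫₀ᵗ δ` and
`R = α t`, after which `P ≤ η`.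
-/

lemma hasDerivWithinAt_integral_Icc {E : Type*} [NormedAddCommGroup E] [NormedSpace ℝ E]
    [CompleteSpace E] {f : ℝ → E} {a b x t : ℝ} (hf : ContinuousOn f (Icc a b))
    (hx : x ∈ Icc a b) (ht : t ∈ Icc a b) :
    HasDerivWithinAt (fun u ↦ ∫ s in x..u, f s) (f t) (Icc a b) t := by
  -- instance search for `FTCFilter` on `Icc a b` needs this
  have : Fact (t ∈ Icc a b) := ⟨ht⟩
  exact intervalIntegral.integral_hasDerivWithinAt_right
    (hf.mono (uIcc_subset_Icc hx ht)).intervalIntegrable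
    (hf.stronglyMeasurableAtFilter_nhdsWithin measurableSet_Icc t) (hf t ht)

lemma monotoneOn_Icc_of_hasDerivWithinAt_nonneg {f f' : ℝ → ℝ} {a b : ℝ}
    (hf : ∀ t ∈ Icc a b, HasDerivWithinAt f (f' t) (Icc a b) t)
    (hf' : ∀ t ∈ Icc a b, 0 ≤ f' t) : MonotoneOn f (Icc a b) :=
  monotoneOn_of_hasDerivWithinAt_nonneg (convex_Icc a b) (HasDerivWithinAt.continuousOn hf)
    (fun t ht ↦ (hf t (interior_subset ht)).mono interior_subset)
    fun t ht ↦ hf' t (interior_subset ht)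

section Comparison

variable {t₀ T : ℝ} {a c δ u u' v v' : ℝ → ℝ}

lemma le_mul_exp_integral_of_deriv_le_mul (ha : ContinuousOn a (Icc t₀ T))
    (hu : ∀ t ∈ Icc t₀ T, HasDerivWithinAt u (u' t) (Icc t₀ T) t)
    (hle : ∀ t ∈ Icc t₀ T, u' t ≤ a t * u t) {t : ℝ} (ht : t ∈ Icc t₀ T) :
    u t ≤ u t₀ * Real.exp (∫ s in t₀..t, a s) := by
  have ht₀ : t₀ ∈ Icc t₀ T := ⟨le_rfl, ht.1.trans ht.2⟩
  have hderiv : ∀ s ∈ Icc t₀ T, HasDerivWithinAt (fun s ↦ u s * Real.exp (-∫ r in t₀..s, a r))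
      ((u' s - a s * u s) * Real.exp (-∫ r in t₀..s, a r)) (Icc t₀ T) s := fun s hs ↦
    ((hu s hs).mul (hasDerivWithinAt_integral_Icc ha ht₀ hs).fun_neg.exp).congr_deriv (by ring)
  have hanti : AntitoneOn (fun s ↦ u s * Real.exp (-∫ r in t₀..s, a r)) (Icc t₀ T) :=
    antitoneOn_of_hasDerivWithinAt_nonpos (convex_Icc t₀ T)
      (HasDerivWithinAt.continuousOn hderiv)
      (fun s hs ↦ (hderiv s (interior_subset hs)).mono interior_subset)
      fun s hs ↦ mul_nonpos_of_nonpos_of_nonneg (sub_nonpos.2 (hle s (interior_subset hs)))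
        (Real.exp_pos _).le
  simpa [Real.exp_neg, ← div_eq_mul_inv, div_le_iff₀ (Real.exp_pos _)] using hanti ht₀ ht ht.1

theorem riccati_subsolution_le_supersolution
    (ha : ContinuousOn a (Icc t₀ T)) (hc : ContinuousOn c (Icc t₀ T))
    (hu : ∀ t ∈ Icc t₀ T, HasDerivWithinAt u (u' t) (Icc t₀ T) t)
    (hv : ∀ t ∈ Icc t₀ T, HasDerivWithinAt v (v' t) (Icc t₀ T) t)
    (hsub : ∀ t ∈ Icc t₀ T, u' t ≤ δ t + a t * u t + c t * u t ^ 2)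
    (hsuper : ∀ t ∈ Icc t₀ T, δ t + a t * v t + c t * v t ^ 2 ≤ v' t)
    (h₀ : u t₀ ≤ v t₀) {t : ℝ} (ht : t ∈ Icc t₀ T) : u t ≤ v t := by
  have hcoeff : ContinuousOn (fun t ↦ a t + c t * (u t + v t)) (Icc t₀ T) :=
    ha.add (hc.mul ((HasDerivWithinAt.continuousOn hu).add (HasDerivWithinAt.continuousOn hv)))
  have hgronwall := le_mul_exp_integral_of_deriv_le_mul hcoeff
    (fun s hs ↦ (hu s hs).fun_sub (hv s hs))
    (fun s hs ↦ by linear_combination hsub s hs + hsuper s hs) ht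
  exact sub_nonpos.1 (hgronwall.trans
    (mul_nonpos_of_nonpos_of_nonneg (sub_nonpos.2 h₀) (Real.exp_pos _).le))

end Comparison

/-- The barrier `exp A · P / (1 - P R)` for the Riccati equation `x' = δ + a x + c x²`. With `P`
constant, `A' = a` and `R' = c exp A` it is the general solution of the unforced equation; letting
`P` vary, as in variation of constants, takes care of `δ`. It is only meaningful where
`P R < 1`: at `P R = 1` the solution blows up, while the division returns `0`. -/
noncomputable def riccatiBarrier (A P R : ℝ → ℝ) (t : ℝ) : ℝ :=
  Real.exp (A t) * (P t / (1 - P t * R t))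

section Barrier

variable {A P R : ℝ → ℝ} {A' P' R' t : ℝ}

lemma hasDerivWithinAt_riccatiBarrier {s : Set ℝ} (hA : HasDerivWithinAt A A' s t)
    (hP : HasDerivWithinAt P P' s t) (hR : HasDerivWithinAt R R' s t) (hPR : P t * R t ≠ 1) :
    HasDerivWithinAt (riccatiBarrier A P R)
      (A' * riccatiBarrier A P R t +
        Real.exp (A t) * ((P' + R' * P t ^ 2) / (1 - P t * R t) ^ 2)) s t := by
  have hden : 1 - P t * R t ≠ 0 := sub_ne_zero.2 hPR.symm
  refine (hA.exp.mul (hP.fun_div ((hP.fun_mul hR).const_sub 1) hden)).congr_deriv ?_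
  simp only [riccatiBarrier]
  ring

lemma le_deriv_riccatiBarrier {δ c : ℝ} (hδ : δ ≤ Real.exp (A t) * P')
    (hc : c * Real.exp (A t) ≤ R') (hP' : 0 ≤ P') (hPR_nonneg : 0 ≤ P t * R t)
    (hPR_lt : P t * R t < 1) :
    δ + A' * riccatiBarrier A P R t + c * riccatiBarrier A P R t ^ 2 ≤
      A' * riccatiBarrier A P R t +
        Real.exp (A t) * ((P' + R' * P t ^ 2) / (1 - P t * R t) ^ 2) := by
  have hden_pos : 0 < 1 - P t * R t := sub_pos.2 hPR_lt
  have hforcing : δ ≤ Real.exp (A t) * (P' / (1 - P t * R t) ^ 2) := by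
    refine hδ.trans (mul_le_mul_of_nonneg_left ?_ (Real.exp_pos _).le)
    exact le_div_self hP' (by positivity) (pow_le_one₀ hden_pos.le (by linarith))
  have hquadratic : c * riccatiBarrier A P R t ^ 2 ≤
      Real.exp (A t) * (R' * P t ^ 2 / (1 - P t * R t) ^ 2) := by
    calc c * riccatiBarrier A P R t ^ 2
        = c * Real.exp (A t) * (Real.exp (A t) * (P t / (1 - P t * R t)) ^ 2) := by
          rw [riccatiBarrier, mul_pow]; ring
      _ ≤ R' * (Real.exp (A t) * (P t / (1 - P t * R t)) ^ 2) :=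
          mul_le_mul_of_nonneg_right hc (by positivity)
      _ = Real.exp (A t) * (R' * P t ^ 2 / (1 - P t * R t) ^ 2) := by rw [div_pow]; ring
  rw [add_div, mul_add]
  linarith

end Barrier

theorem le_exp_mul_div_of_deriv_le_riccati {t₀ T : ℝ} {a c δ u u' A P P' R R' : ℝ → ℝ}
    (ha : ContinuousOn a (Icc t₀ T)) (hc : ContinuousOn c (Icc t₀ T))
    (hu : ∀ t ∈ Icc t₀ T, HasDerivWithinAt u (u' t) (Icc t₀ T) t)
    (hA : ∀ t ∈ Icc t₀ T, HasDerivWithinAt A (a t) (Icc t₀ T) t)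
    (hP : ∀ t ∈ Icc t₀ T, HasDerivWithinAt P (P' t) (Icc t₀ T) t)
    (hR : ∀ t ∈ Icc t₀ T, HasDerivWithinAt R (R' t) (Icc t₀ T) t)
    (hsub : ∀ t ∈ Icc t₀ T, u' t ≤ δ t + a t * u t + c t * u t ^ 2)
    (hδ : ∀ t ∈ Icc t₀ T, δ t ≤ Real.exp (A t) * P' t)
    (hcR : ∀ t ∈ Icc t₀ T, c t * Real.exp (A t) ≤ R' t)
    (hP' : ∀ t ∈ Icc t₀ T, 0 ≤ P' t) (hR' : ∀ t ∈ Icc t₀ T, 0 ≤ R' t)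
    (hP₀ : 0 ≤ P t₀) (hR₀ : 0 ≤ R t₀) (hPR : P T * R T < 1)
    (h₀ : u t₀ ≤ riccatiBarrier A P R t₀) {t : ℝ} (ht : t ∈ Icc t₀ T) :
    u t ≤ Real.exp (A t) * (P T / (1 - P T * R t)) := by
  have ht₀ : t₀ ∈ Icc t₀ T := ⟨le_rfl, ht.1.trans ht.2⟩
  have hT : T ∈ Icc t₀ T := ⟨ht₀.2, le_rfl⟩
  have hP_mono : MonotoneOn P (Icc t₀ T) := monotoneOn_Icc_of_hasDerivWithinAt_nonneg hP hP'
  have hR_mono : MonotoneOn R (Icc t₀ T) := monotoneOn_Icc_of_hasDerivWithinAt_nonneg hR hR'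
  have hP_nonneg : ∀ s ∈ Icc t₀ T, 0 ≤ P s := fun s hs ↦ hP₀.trans (hP_mono ht₀ hs hs.1)
  have hR_nonneg : ∀ s ∈ Icc t₀ T, 0 ≤ R s := fun s hs ↦ hR₀.trans (hR_mono ht₀ hs hs.1)
  have hPR_le : ∀ s ∈ Icc t₀ T, P s * R s ≤ P T * R s := fun s hs ↦
    mul_le_mul_of_nonneg_right (hP_mono hs hT hs.2) (hR_nonneg s hs)
  have hPR_lt : ∀ s ∈ Icc t₀ T, P T * R s < 1 := fun s hs ↦
    (mul_le_mul_of_nonneg_left (hR_mono hs hT hs.2) (hP_nonneg T hT)).trans_lt hPR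
  have hu_le : u t ≤ riccatiBarrier A P R t :=
    riccati_subsolution_le_supersolution ha hc hu
      (fun s hs ↦ hasDerivWithinAt_riccatiBarrier (hA s hs) (hP s hs) (hR s hs)
        ((hPR_le s hs).trans_lt (hPR_lt s hs)).ne)
      hsub
      (fun s hs ↦ le_deriv_riccatiBarrier (hδ s hs) (hcR s hs) (hP' s hs)
        (mul_nonneg (hP_nonneg s hs) (hR_nonneg s hs)) ((hPR_le s hs).trans_lt (hPR_lt s hs)))
      h₀ ht
  calc u t ≤ Real.exp (A t) * (P t / (1 - P t * R t)) := hu_le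
    _ ≤ Real.exp (A t) * (P T / (1 - P T * R t)) :=
        mul_le_mul_of_nonneg_left (div_le_div₀ (hP_nonneg T hT) (hP_mono ht hT ht.2)
          (sub_pos.2 (hPR_lt t ht)) (sub_le_sub_left (hPR_le t ht) 1)) (Real.exp_pos _).le

theorem ode_robustness_core_general {T c α η : ℝ} {a δ w w' : ℝ → ℝ} (hc : 0 ≤ c)
    (hacont : ContinuousOn a (Icc 0 T)) (hanonneg : ∀ t ∈ Icc 0 T, 0 ≤ a t)
    (hδcont : ContinuousOn δ (Icc 0 T)) (hδnonneg : ∀ t ∈ Icc 0 T, 0 ≤ δ t)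
    (hderiv : ∀ t ∈ Icc 0 T, HasDerivWithinAt w (w' t) (Icc 0 T) t) (hw0 : 0 ≤ w 0)
    (hineq : ∀ t ∈ Icc 0 T, w' t ≤ δ t + a t * w t + c * w t ^ 2)
    (hα : α = c * Real.exp (∫ s in 0..T, a s)) (hη : η = w 0 + ∫ s in 0..T, δ s)
    (hsmall : α * η * T < 1) {t : ℝ} (ht : t ∈ Icc 0 T) :
    w t ≤ Real.exp (∫ s in 0..t, a s) * η / (1 - α * η * t) := by
  let A (t : ℝ) : ℝ := ∫ s in 0..t, a s
  let P (t : ℝ) : ℝ := w 0 + ∫ s in 0..t, δ s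
  have h0 : 0 ∈ Icc 0 T := ⟨le_rfl, ht.1.trans ht.2⟩
  have hT : T ∈ Icc 0 T := ⟨h0.2, le_rfl⟩
  have hA : ∀ s ∈ Icc 0 T, HasDerivWithinAt A (a s) (Icc 0 T) s := fun s hs ↦
    hasDerivWithinAt_integral_Icc hacont h0 hs
  have hP : ∀ s ∈ Icc 0 T, HasDerivWithinAt P (δ s) (Icc 0 T) s := fun s hs ↦
    (hasDerivWithinAt_integral_Icc hδcont h0 hs).const_add (w 0)
  have hR : ∀ s ∈ Icc 0 T, HasDerivWithinAt (fun t ↦ α * t) α (Icc 0 T) s := fun s _ ↦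
    ((hasDerivAt_id s).const_mul α).hasDerivWithinAt.congr_deriv (mul_one α)
  have hA_mono : MonotoneOn A (Icc 0 T) := monotoneOn_Icc_of_hasDerivWithinAt_nonneg hA hanonneg
  have hA0 : A 0 = 0 := intervalIntegral.integral_same
  have hP0 : P 0 = w 0 := by simp [P]
  have hforcing : ∀ s ∈ Icc 0 T, δ s ≤ Real.exp (A s) * δ s := fun s hs ↦
    le_mul_of_one_le_left (hδnonneg s hs) (Real.one_le_exp (hA0 ▸ hA_mono h0 hs hs.1))
  have hquadratic : ∀ s ∈ Icc 0 T, c * Real.exp (A s) ≤ α := fun s hs ↦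
    hα ▸ mul_le_mul_of_nonneg_left (Real.exp_le_exp.2 (hA_mono hs hT hs.2)) hc
  have hα_nonneg : 0 ≤ α := hα ▸ mul_nonneg hc (Real.exp_pos _).le
  have hPR : P T * (α * T) < 1 :=
    calc P T * (α * T) = α * η * T := by rw [hη]; ring
      _ < 1 := hsmall
  have hinit : w 0 ≤ riccatiBarrier A P (fun t ↦ α * t) 0 := by
    simp only [riccatiBarrier, hA0, hP0, Real.exp_zero, mul_zero, sub_zero, div_one, one_mul,
      le_refl]
  calc w t ≤ Real.exp (A t) * (P T / (1 - P T * (α * t))) :=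
        le_exp_mul_div_of_deriv_le_riccati hacont continuousOn_const hderiv hA hP hR hineq
          hforcing hquadratic hδnonneg (fun _ _ ↦ hα_nonneg) (hw0.trans_eq hP0.symm)
          (mul_zero α).ge hPR hinit ht
    _ = Real.exp (A t) * η / (1 - α * η * t) := by rw [hη]; ring

/-- Analytic core of the robustness argument: if `w ≥ 0` satisfies
`w' ≤ δ(t) + a(t) w + c w²` on `[0,T]`, and with `α = c exp(∫₀ᵀ a)` and
`η = w(0) + ∫₀ᵀ δ` one has `α η T < 1`, then
`w(t) ≤ exp(∫₀ᵗ a) η / (1 - α η t)` on `[0,T]`. -/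
theorem ode_robustness_core
    (T c w₀ : ℝ) (hT : 0 < T) (hc : 0 < c)
    (a δ w w' : ℝ → ℝ)
    (hacont : ContinuousOn a (Icc 0 T))
    (hanonneg : ∀ t ∈ Icc (0:ℝ) T, 0 ≤ a t)
    (hδcont : ContinuousOn δ (Icc 0 T))
    (hδnonneg : ∀ t ∈ Icc (0:ℝ) T, 0 ≤ δ t)
    (hderiv : ∀ t ∈ Icc (0:ℝ) T, HasDerivWithinAt w (w' t) (Icc 0 T) t)
    (hwnonneg : ∀ t ∈ Icc (0:ℝ) T, 0 ≤ w t)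
    (hw0 : w 0 = w₀)
    (hineq : ∀ t ∈ Icc (0:ℝ) T, w' t ≤ δ t + a t * w t + c * (w t) ^ 2)
    (α η : ℝ)
    (hα : α = c * Real.exp (∫ s in (0:ℝ)..T, a s))
    (hη : η = w₀ + ∫ s in (0:ℝ)..T, δ s)
    (hsmall : α * η * T < 1) :
    ∀ t ∈ Icc (0:ℝ) T,
      w t ≤ Real.exp (∫ s in (0:ℝ)..t, a s) * η / (1 - α * η * t) := by
  exact fun _ ht ↦ ode_robustness_core_general hc.le hacont hanonneg hδcont hδnonneg hderiv
    (hwnonneg 0 ⟨le_rfl, hT.le⟩) hineq hα (hw0 ▸ hη) hsmall ht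
end

section
/- Let φ : ℝ³ → ℝ be continuous, nonnegative, supported in the closed unit ball, with ∫_{ℝ³} φ = 1, and for ε > 0 define φ^ε(x) = ε⁻³·φ(x/ε). Let f, g : ℝ³ → ℝ be continuous and satisfy |f(x) − f(y)| ≤ C_f·|x − y|^{1/2} and |g(x) − g(y)| ≤ C_g·|x − y|^{1/2} for all x, y ∈ ℝ³ (with C_f, C_g ≥ 0). Define r_ε(f,g)(x) = ∫_{ℝ³} φ^ε(y)·(f(x − y) − f(x))·(g(x − y) − g(x)) dy. Then for every ε > 0 and every x ∈ ℝ³, |r_ε(f,g)(x)| ≤ C_f·C_g·ε. -/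
open MeasureTheory

/-!
On the support of the kernel one has `‖y‖ ≤ ε`, so the two increments, of Hölder exponents `α` and
`β`, are at most `C_f ε ^ α` and `C_g ε ^ β`. The remainder is therefore at most
`C_f C_g ε ^ (α + β)` times the `L¹` norm of the kernel, which does not change under the rescaling
`φ ↦ φ^ε`.
-/

open Function Metric Module
open scoped NNReal

section Holder

variable {E F : Type*} [SeminormedAddCommGroup E]

lemma holderWith_of_norm_sub_le [SeminormedAddCommGroup F] {f : E → F} {C r : ℝ≥0}
    (h : ∀ x y, ‖f x - f y‖ ≤ C * ‖x - y‖ ^ (r : ℝ)) : HolderWith C r f := fun x y ↦ by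
  rw [edist_nndist, edist_nndist, ← ENNReal.coe_rpow_of_nonneg _ r.coe_nonneg, ← ENNReal.coe_mul,
    ENNReal.coe_le_coe, ← NNReal.coe_le_coe]
  simpa [dist_eq_norm] using h x y

lemma norm_increment_le [SeminormedAddCommGroup F] {f : E → F} {C r : ℝ≥0} (hf : HolderWith C r f)
    (x : E) {y : E} {ε : ℝ} (hy : ‖y‖ ≤ ε) : ‖f (x - y) - f x‖ ≤ C * ε ^ (r : ℝ) := by
  rw [← dist_eq_norm]
  exact hf.dist_le_of_le (by simpa [dist_eq_norm] using hy)

lemma norm_increment_mul_increment_le [NonUnitalSeminormedRing F] {f g : E → F}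
    {Cf Cg α β : ℝ≥0} (hf : HolderWith Cf α f) (hg : HolderWith Cg β g)
    (x : E) {y : E} {ε : ℝ} (hy : ‖y‖ ≤ ε) :
    ‖(f (x - y) - f x) * (g (x - y) - g x)‖ ≤ Cf * Cg * ε ^ (α + β : ℝ) := by
  have hε : 0 ≤ ε := (norm_nonneg y).trans hy
  calc ‖(f (x - y) - f x) * (g (x - y) - g x)‖
      ≤ ‖f (x - y) - f x‖ * ‖g (x - y) - g x‖ := norm_mul_le _ _
    _ ≤ (Cf * ε ^ (α : ℝ)) * (Cg * ε ^ (β : ℝ)) := by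
        gcongr
        exacts [norm_increment_le hf x hy, norm_increment_le hg x hy]
    _ = Cf * Cg * ε ^ (α + β : ℝ) := by
        rw [Real.rpow_add_of_nonneg hε α.coe_nonneg β.coe_nonneg]
        ring

lemma norm_mul_increments_le [NonUnitalSeminormedRing F] {k f g : E → F} {Cf Cg α β : ℝ≥0} {ε : ℝ}
    (hk : support k ⊆ closedBall 0 ε) (hf : HolderWith Cf α f) (hg : HolderWith Cg β g) (x y : E) :
    ‖k y * ((f (x - y) - f x) * (g (x - y) - g x))‖ ≤ ‖k y‖ * (Cf * Cg * ε ^ (α + β : ℝ)) := by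
  by_cases hky : k y = 0
  · simp [hky]
  have hy : ‖y‖ ≤ ε := mem_closedBall_zero_iff.1 (hk hky)
  exact (norm_mul_le _ _).trans <| by gcongr; exact norm_increment_mul_increment_le hf hg x hy

end Holder

section CommutatorRemainder

variable {E 𝕜 : Type*} [SeminormedAddCommGroup E] [MeasurableSpace E] [RCLike 𝕜]

/-- The Constantin–E–Titi commutator remainder of `f` and `g` at `x`, for the convolution kernel
`k`; the remainder `r_ε(f, g)` is the case `k = φ^ε`. -/
noncomputable def commutatorRemainder (μ : Measure E) (k f g : E → 𝕜) (x : E) : 𝕜 :=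
  ∫ y, k y * ((f (x - y) - f x) * (g (x - y) - g x)) ∂μ

variable {μ : Measure E} {k f g : E → 𝕜} {Cf Cg α β : ℝ≥0} {ε : ℝ}

lemma integrable_mul_increments [OpensMeasurableSpace E] (hk : Integrable k μ)
    (hksupp : support k ⊆ closedBall 0 ε) (hα : 0 < α) (hβ : 0 < β)
    (hf : HolderWith Cf α f) (hg : HolderWith Cg β g) (x : E) :
    Integrable (fun y ↦ k y * ((f (x - y) - f x) * (g (x - y) - g x))) μ := by
  have hfc : Continuous f := hf.continuous hα
  have hgc : Continuous g := hg.continuous hβ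
  have hincr : Continuous fun y ↦ (f (x - y) - f x) * (g (x - y) - g x) := by fun_prop
  exact (hk.norm.mul_const _).mono' (hk.aestronglyMeasurable.mul hincr.aestronglyMeasurable)
    (ae_of_all _ (norm_mul_increments_le hksupp hf hg x))

lemma norm_commutatorRemainder_le (hk : Integrable k μ) (hksupp : support k ⊆ closedBall 0 ε)
    (hf : HolderWith Cf α f) (hg : HolderWith Cg β g) (x : E) :
    ‖commutatorRemainder μ k f g x‖ ≤ (∫ y, ‖k y‖ ∂μ) * (Cf * Cg * ε ^ (α + β : ℝ)) := by
  rw [← integral_mul_const]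
  exact norm_integral_le_of_norm_le (hk.norm.mul_const _)
    (ae_of_all _ (norm_mul_increments_le hksupp hf hg x))

end CommutatorRemainder

section Mollifier

variable {E F : Type*} [NormedAddCommGroup E] [NormedSpace ℝ E]
  [NormedAddCommGroup F] [NormedSpace ℝ F]

/-- The rescaled kernel `φ^ε(y) = ε⁻ᵈ φ(y / ε)` on a space of dimension `d`. -/
noncomputable def mollifier (φ : E → F) (ε : ℝ) (y : E) : F :=
  (ε ^ finrank ℝ E)⁻¹ • φ (ε⁻¹ • y)

variable {φ : E → F} {ε : ℝ}

lemma norm_mollifier (hε : 0 ≤ ε) (y : E) : ‖mollifier φ ε y‖ = mollifier (‖φ ·‖) ε y := by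
  simp [mollifier, norm_smul, abs_of_nonneg hε]

lemma support_mollifier_subset (hε : 0 < ε) (hφ : support φ ⊆ closedBall 0 1) :
    support (mollifier φ ε) ⊆ closedBall 0 ε := fun y hy ↦ by
  have hy' : ε⁻¹ • y ∈ closedBall 0 1 := hφ (right_ne_zero_of_smul hy)
  rw [mem_closedBall_zero_iff, norm_smul, Real.norm_of_nonneg (inv_nonneg.2 hε.le),
    inv_mul_le_iff₀ hε, mul_one] at hy'
  exact mem_closedBall_zero_iff.2 hy'

variable [FiniteDimensional ℝ E] [MeasurableSpace E] [BorelSpace E]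
  {μ : Measure E} [μ.IsAddHaarMeasure]

lemma integrable_mollifier (hε : ε ≠ 0) (hφ : Integrable φ μ) : Integrable (mollifier φ ε) μ :=
  (hφ.comp_smul (inv_ne_zero hε)).smul _

lemma integral_mollifier (hε : 0 < ε) : ∫ y, mollifier φ ε y ∂μ = ∫ y, φ y ∂μ := by
  simp only [mollifier]
  rw [integral_smul, Measure.integral_comp_inv_smul_of_nonneg μ φ hε.le,
    inv_smul_smul₀ (pow_ne_zero _ hε.ne')]

lemma integral_norm_mollifier (hε : 0 < ε) : ∫ y, ‖mollifier φ ε y‖ ∂μ = ∫ y, ‖φ y‖ ∂μ := by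
  simp_rw [norm_mollifier hε.le, integral_mollifier hε]

end Mollifier

theorem commutator_remainder_estimate_general {E 𝕜 : Type*} [NormedAddCommGroup E]
    [NormedSpace ℝ E] [FiniteDimensional ℝ E] [MeasurableSpace E] [BorelSpace E] [RCLike 𝕜]
    {μ : Measure E} [μ.IsAddHaarMeasure] {φ f g : E → 𝕜} {Cf Cg α β : ℝ≥0} {ε : ℝ}
    (hφ : Integrable φ μ) (hφsupp : support φ ⊆ closedBall 0 1) (hα : 0 < α) (hβ : 0 < β)
    (hf : HolderWith Cf α f) (hg : HolderWith Cg β g) (hε : 0 < ε) (x : E) :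
    Integrable (fun y ↦ mollifier φ ε y * ((f (x - y) - f x) * (g (x - y) - g x))) μ ∧
      ‖commutatorRemainder μ (mollifier φ ε) f g x‖
        ≤ (∫ y, ‖φ y‖ ∂μ) * (Cf * Cg * ε ^ (α + β : ℝ)) := by
  have hint : Integrable (mollifier φ ε) μ := integrable_mollifier hε.ne' hφ
  have hsupp : support (mollifier φ ε) ⊆ closedBall 0 ε := support_mollifier_subset hε hφsupp
  refine ⟨integrable_mul_increments hint hsupp hα hβ hf hg x, ?_⟩
  simpa only [integral_norm_mollifier hε] using norm_commutatorRemainder_le hint hsupp hf hg x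

/-- The Constantin–E–Titi commutator remainder
`r_ε(f,g)(x) = ∫ φ^ε(y) (f(x-y) - f(x)) (g(x-y) - g(x)) dy` of two Hölder-1/2
functions satisfies `|r_ε(f,g)(x)| ≤ C_f C_g ε`. -/
theorem commutator_remainder_estimate
    (φ f g : EuclideanSpace ℝ (Fin 3) → ℝ) (Cf Cg : ℝ)
    (hφcont : Continuous φ)
    (hφnonneg : ∀ x, 0 ≤ φ x)
    (hφsupp : ∀ x, φ x ≠ 0 → ‖x‖ ≤ 1)
    (hφint : ∫ x, φ x = 1)
    (hfcont : Continuous f) (hgcont : Continuous g)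
    (hCf : 0 ≤ Cf) (hCg : 0 ≤ Cg)
    (hf : ∀ x y, |f x - f y| ≤ Cf * ‖x - y‖ ^ ((1:ℝ)/2))
    (hg : ∀ x y, |g x - g y| ≤ Cg * ‖x - y‖ ^ ((1:ℝ)/2)) :
    ∀ ε > (0:ℝ), ∀ x : EuclideanSpace ℝ (Fin 3),
      |∫ y, ((ε ^ 3)⁻¹ * φ (ε⁻¹ • y)) * ((f (x - y) - f x) * (g (x - y) - g x))|
        ≤ Cf * Cg * ε := by
  intro ε hε x
  lift Cf to ℝ≥0 using hCf
  lift Cg to ℝ≥0 using hCg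
  have hfH : HolderWith Cf (1 / 2) f := holderWith_of_norm_sub_le (by simpa using hf)
  have hgH : HolderWith Cg (1 / 2) g := holderWith_of_norm_sub_le (by simpa using hg)
  have hφi : Integrable φ := integrable_of_integral_eq_one hφint
  have hsupp : support φ ⊆ closedBall 0 1 := fun y hy ↦ mem_closedBall_zero_iff.2 (hφsupp y hy)
  have hmass : ∫ y, |φ y| = 1 := by simpa only [abs_of_nonneg (hφnonneg _)] using hφint
  have hexp : ((1 / 2 : ℝ≥0) + (1 / 2 : ℝ≥0) : ℝ) = 1 := by norm_num
  simpa only [commutatorRemainder, mollifier, finrank_euclideanSpace_fin, smul_eq_mul, hmass, hexp,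
    Real.rpow_one, one_mul, Real.norm_eq_abs] using
    (commutator_remainder_estimate_general hφi hsupp (by simp) (by simp) hfH hgH hε x).2
end

section
/- Let φ : ℝ³ → ℝ be continuous, compactly supported, with ∫_{ℝ³} φ = 1, and for ε > 0 define φ^ε(x) = ε⁻³·φ(x/ε). Let f, g : ℝ³ → ℝ be continuous and bounded, and for a function h write h^ε = φ^ε ⋆ h for its mollification, h^ε(x) = ∫_{ℝ³} φ^ε(y)·h(x − y) dy. Define r_ε(f,g)(x) = ∫_{ℝ³} φ^ε(y)·(f(x − y) − f(x))·(g(x − y) − g(x)) dy. Then for every x ∈ ℝ³ the pointwise identity (f·g)^ε(x) = f^ε(x)·g^ε(x) + r_ε(f,g)(x) − (f(x) − f^ε(x))·(g(x) − g^ε(x)) holds. -/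
open MeasureTheory

/-!
Since `φ^ε` has mass one, expanding the increments in the remainder and integrating term by term
gives `r_ε(f, g)(x) = (f g)^ε(x) - f^ε(x) g(x) - f(x) g^ε(x) + f(x) g(x)`. The last three terms are
`(f(x) - f^ε(x)) (g(x) - g^ε(x)) - f^ε(x) g^ε(x)`.
-/

section BilinearExpansion

variable {α F₁ F₂ F₃ : Type*} [MeasurableSpace α] {μ : Measure α}
  [NormedAddCommGroup F₁] [NormedSpace ℝ F₁] [CompleteSpace F₁]
  [NormedAddCommGroup F₂] [NormedSpace ℝ F₂] [CompleteSpace F₂]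
  [NormedAddCommGroup F₃] [NormedSpace ℝ F₃] [CompleteSpace F₃]

theorem integral_smul_bilinear_sub_sub (B : F₁ →L[ℝ] F₂ →L[ℝ] F₃) {ψ : α → ℝ} {u : α → F₁}
    {v : α → F₂} (hψ : Integrable ψ μ) (hu : Integrable (fun y ↦ ψ y • u y) μ)
    (hv : Integrable (fun y ↦ ψ y • v y) μ) (huv : Integrable (fun y ↦ ψ y • B (u y) (v y)) μ)
    (a : F₁) (b : F₂) :
    ∫ y, ψ y • B (u y - a) (v y - b) ∂μ =
      ∫ y, ψ y • B (u y) (v y) ∂μ - B (∫ y, ψ y • u y ∂μ) b - B a (∫ y, ψ y • v y ∂μ) +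
        (∫ y, ψ y ∂μ) • B a b := by
  have hub : Integrable (fun y ↦ B.flip b (ψ y • u y)) μ := (B.flip b).integrable_comp hu
  have hav : Integrable (fun y ↦ B a (ψ y • v y)) μ := (B a).integrable_comp hv
  calc ∫ y, ψ y • B (u y - a) (v y - b) ∂μ
      = ∫ y, (ψ y • B (u y) (v y) - B.flip b (ψ y • u y) - B a (ψ y • v y) + ψ y • B a b) ∂μ := by
        congr 1 with y
        simp only [map_sub, map_smul, sub_apply, ContinuousLinearMap.flip_apply]
        module
    _ = ∫ y, ψ y • B (u y) (v y) ∂μ - ∫ y, B.flip b (ψ y • u y) ∂μ - ∫ y, B a (ψ y • v y) ∂μ +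
          ∫ y, ψ y • B a b ∂μ := by
        rw [integral_add ?_ (hψ.smul_const _), integral_sub ?_ hav, integral_sub huv hub]
        exacts [huv.sub hub, (huv.sub hub).sub hav]
    _ = ∫ y, ψ y • B (u y) (v y) ∂μ - B (∫ y, ψ y • u y ∂μ) b - B a (∫ y, ψ y • v y ∂μ) +
          (∫ y, ψ y ∂μ) • B a b := by
        rw [(B.flip b).integral_comp_comm hu, (B a).integral_comp_comm hv, integral_smul_const,
          ContinuousLinearMap.flip_apply]

end BilinearExpansion

section Remainder

open ContinuousLinearMap (lsmul)
open scoped Convolution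

variable {G F₁ F₂ F₃ : Type*} [MeasurableSpace G] [Sub G]
  [NormedAddCommGroup F₁] [NormedSpace ℝ F₁] [NormedAddCommGroup F₂] [NormedSpace ℝ F₂]
  [NormedAddCommGroup F₃] [NormedSpace ℝ F₃]

/-- The Constantin–E–Titi remainder of the kernel `ψ`: the `ψ`-average of the product of the
increments of `f` and `g` at `x`; the paper's `r_ε` is the case `ψ = φ^ε`. The product is a
continuous bilinear map `B` so that it covers the transport term `(u · ∇)v`, with `B a A = A a`,
`f = u` and `g = ∇v`. -/
noncomputable def mollificationRemainder (B : F₁ →L[ℝ] F₂ →L[ℝ] F₃) (ψ : G → ℝ) (f : G → F₁)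
    (g : G → F₂) (μ : Measure G) (x : G) : F₃ :=
  ∫ y, ψ y • B (f (x - y) - f x) (g (x - y) - g x) ∂μ

theorem convolution_bilinear_eq_add_mollificationRemainder_sub
    [CompleteSpace F₁] [CompleteSpace F₂] [CompleteSpace F₃] (B : F₁ →L[ℝ] F₂ →L[ℝ] F₃)
    {μ : Measure G} {ψ : G → ℝ} {f : G → F₁} {g : G → F₂} {x : G}
    (hψ : Integrable ψ μ) (hψ_one : ∫ y, ψ y ∂μ = 1)
    (hf : ConvolutionExistsAt ψ f x (lsmul ℝ ℝ) μ) (hg : ConvolutionExistsAt ψ g x (lsmul ℝ ℝ) μ)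
    (hfg : ConvolutionExistsAt ψ (fun z ↦ B (f z) (g z)) x (lsmul ℝ ℝ) μ) :
    (ψ ⋆[lsmul ℝ ℝ, μ] fun z ↦ B (f z) (g z)) x =
      B ((ψ ⋆[lsmul ℝ ℝ, μ] f) x) ((ψ ⋆[lsmul ℝ ℝ, μ] g) x) + mollificationRemainder B ψ f g μ x -
        B (f x - (ψ ⋆[lsmul ℝ ℝ, μ] f) x) (g x - (ψ ⋆[lsmul ℝ ℝ, μ] g) x) := by
  have remainder_eq : mollificationRemainder B ψ f g μ x =
      (ψ ⋆[lsmul ℝ ℝ, μ] fun z ↦ B (f z) (g z)) x - B ((ψ ⋆[lsmul ℝ ℝ, μ] f) x) (g x) -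
        B (f x) ((ψ ⋆[lsmul ℝ ℝ, μ] g) x) + B (f x) (g x) := by
    simpa only [hψ_one, one_smul, mollificationRemainder, convolution_lsmul] using
      integral_smul_bilinear_sub_sub B hψ hf hg hfg (f x) (g x)
  rw [remainder_eq]
  simp only [map_sub, sub_apply]
  abel

end Remainder

section RescaledKernel

variable {E : Type*} [NormedAddCommGroup E] [NormedSpace ℝ E] {φ : E → ℝ} {ε : ℝ}

/-- The mollifier `φ^ε` at scale `ε`, normalized by the dimension of `E` so as to keep the mass of
`φ` when `0 < ε`. -/
noncomputable def rescaledKernel (φ : E → ℝ) (ε : ℝ) (x : E) : ℝ :=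
  (ε ^ Module.finrank ℝ E)⁻¹ * φ (ε⁻¹ • x)

theorem hasCompactSupport_rescaledKernel (hφ : HasCompactSupport φ) (hε : ε ≠ 0) :
    HasCompactSupport (rescaledKernel φ ε) :=
  (hφ.comp_smul (inv_ne_zero hε)).mul_left

variable [MeasurableSpace E] [BorelSpace E] [FiniteDimensional ℝ E] {μ : Measure E}
  [μ.IsAddHaarMeasure]

theorem integrable_rescaledKernel (hφ : Integrable φ μ) (hε : ε ≠ 0) :
    Integrable (rescaledKernel φ ε) μ :=
  (hφ.comp_smul (inv_ne_zero hε)).const_mul _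

theorem integral_rescaledKernel (φ : E → ℝ) (hε : 0 < ε) :
    ∫ x, rescaledKernel φ ε x ∂μ = ∫ x, φ x ∂μ := by
  simp only [rescaledKernel]
  rw [integral_const_mul, Measure.integral_comp_inv_smul_of_nonneg μ φ hε.le, smul_eq_mul,
    inv_mul_cancel_left₀ (pow_ne_zero _ hε.ne')]

end RescaledKernel

section General

open ContinuousLinearMap (lsmul)
open scoped Convolution

variable {E F₁ F₂ F₃ : Type*} [NormedAddCommGroup E] [NormedSpace ℝ E] [FiniteDimensional ℝ E]
  [MeasurableSpace E] [BorelSpace E] {μ : Measure E} [μ.IsAddHaarMeasure]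
  [NormedAddCommGroup F₁] [NormedSpace ℝ F₁] [CompleteSpace F₁]
  [NormedAddCommGroup F₂] [NormedSpace ℝ F₂] [CompleteSpace F₂]
  [NormedAddCommGroup F₃] [NormedSpace ℝ F₃] [CompleteSpace F₃]

theorem mollification_identity_general (B : F₁ →L[ℝ] F₂ →L[ℝ] F₃) {φ : E → ℝ} {f : E → F₁}
    {g : E → F₂} (hφ : Integrable φ μ) (hφ_supp : HasCompactSupport φ) (hφ_one : ∫ x, φ x ∂μ = 1)
    (hf : Continuous f) (hg : Continuous g) {ε : ℝ} (hε : 0 < ε) (x : E) :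
    (rescaledKernel φ ε ⋆[lsmul ℝ ℝ, μ] fun z ↦ B (f z) (g z)) x =
      B ((rescaledKernel φ ε ⋆[lsmul ℝ ℝ, μ] f) x) ((rescaledKernel φ ε ⋆[lsmul ℝ ℝ, μ] g) x) +
        mollificationRemainder B (rescaledKernel φ ε) f g μ x -
        B (f x - (rescaledKernel φ ε ⋆[lsmul ℝ ℝ, μ] f) x)
          (g x - (rescaledKernel φ ε ⋆[lsmul ℝ ℝ, μ] g) x) := by
  have hψ : Integrable (rescaledKernel φ ε) μ := integrable_rescaledKernel hφ hε.ne'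
  have hψ_one : ∫ y, rescaledKernel φ ε y ∂μ = 1 := (integral_rescaledKernel φ hε).trans hφ_one
  have hψ_supp : HasCompactSupport (rescaledKernel φ ε) :=
    hasCompactSupport_rescaledKernel hφ_supp hε.ne'
  have hfg : Continuous fun z ↦ B (f z) (g z) := by fun_prop
  exact convolution_bilinear_eq_add_mollificationRemainder_sub B hψ hψ_one
    (hψ_supp.convolutionExists_left_of_continuous_right _ hψ.locallyIntegrable hf x)
    (hψ_supp.convolutionExists_left_of_continuous_right _ hψ.locallyIntegrable hg x)
    (hψ_supp.convolutionExists_left_of_continuous_right _ hψ.locallyIntegrable hfg x)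

end General

/-- The Constantin–E–Titi pointwise mollification identity: for bounded continuous
`f, g` and a compactly supported mollifier `φ` with `∫ φ = 1`,
`(f g)^ε = f^ε g^ε + r_ε(f,g) - (f - f^ε)(g - g^ε)` pointwise. -/
theorem mollification_identity
    (φ f g : EuclideanSpace ℝ (Fin 3) → ℝ)
    (hφcont : Continuous φ)
    (hφsupp : HasCompactSupport φ)
    (hφint : ∫ x, φ x = 1)
    (hfcont : Continuous f) (hgcont : Continuous g)
    (Mf Mg : ℝ)
    (hfbdd : ∀ x, |f x| ≤ Mf) (hgbdd : ∀ x, |g x| ≤ Mg) :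
    ∀ ε > (0:ℝ), ∀ x : EuclideanSpace ℝ (Fin 3),
      (∫ y, ((ε ^ 3)⁻¹ * φ (ε⁻¹ • y)) * (f (x - y) * g (x - y)))
        = (∫ y, ((ε ^ 3)⁻¹ * φ (ε⁻¹ • y)) * f (x - y))
            * (∫ y, ((ε ^ 3)⁻¹ * φ (ε⁻¹ • y)) * g (x - y))
          + (∫ y, ((ε ^ 3)⁻¹ * φ (ε⁻¹ • y)) * ((f (x - y) - f x) * (g (x - y) - g x)))
          - (f x - ∫ y, ((ε ^ 3)⁻¹ * φ (ε⁻¹ • y)) * f (x - y))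
              * (g x - ∫ y, ((ε ^ 3)⁻¹ * φ (ε⁻¹ • y)) * g (x - y)) := by
  intro ε hε x
  simpa only [rescaledKernel, mollificationRemainder, convolution_lsmul, smul_eq_mul,
    ContinuousLinearMap.mul_apply', finrank_euclideanSpace_fin] using
    mollification_identity_general (ContinuousLinearMap.mul ℝ ℝ)
      (hφcont.integrable_of_hasCompactSupport hφsupp) hφsupp hφint hfcont hgcont hε x
end
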